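/- arXiv:1811.05555 — 2 statements merged into one kernel-verified Lean document; each statement's English description precedes it below -/
import Mathlib

section
/- Let d ≥ 1, let g : ℝ^d → ℝ be a bounded Lebesgue-measurable function, and let M ⊆ ℝ^d be a set with nonempty interior. If ∫_{ℝ^d} g(t) ∏_{i=1}^d φ(t_i − m_i) dt = 0 for every m = (m_1,…,m_d) ∈ M, where φ(t) = (2π)^{-1/2} exp(−t²/2) is the standard normal density, then g = 0 Lebesgue-almost everywhere on ℝ^d. -/
open MeasureTheory

/-- The standard normal density `φ(t) = (2π)^{-1/2} exp(-t²/2)`. -/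
noncomputable def stdNormalPDF (t : ℝ) : ℝ :=
  (Real.sqrt (2 * Real.pi))⁻¹ * Real.exp (-t ^ 2 / 2)

/-!
Fix an interior point `m₀` of `M` and put `f t = g t * ∏ i, φ (t i - m₀ i)`. Tilting by
`exp ⟨a, t⟩` moves the location of the Gaussian from `m₀` to `m₀ + a`, up to a positive constant,
so the Laplace transform of `f` vanishes near `0`. Along every line through the origin it extends
holomorphically to a vertical strip, so it vanishes on the imaginary axis as well: the finite
measures with densities `f⁺` and `f⁻` have the same characteristic function and hence coincide.
-/

section MGF

open ProbabilityTheory Set Filter Topology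

theorem eqOn_complexMGF_of_mgf_eventuallyEq {Ω Ω' : Type*} {mΩ : MeasurableSpace Ω}
    {mΩ' : MeasurableSpace Ω'} {μ : Measure Ω} {μ' : Measure Ω'} {X : Ω → ℝ} {Y : Ω' → ℝ} {t₀ : ℝ}
    (hX : t₀ ∈ interior (integrableExpSet X μ)) (hY : t₀ ∈ interior (integrableExpSet Y μ'))
    (hXY : mgf X μ =ᶠ[𝓝 t₀] mgf Y μ') :
    EqOn (complexMGF X μ) (complexMGF Y μ')
      {z | z.re ∈ interior (integrableExpSet X μ) ∩ interior (integrableExpSet Y μ')} := by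
  have strip_preconnected : IsPreconnected
      {z : ℂ | z.re ∈ interior (integrableExpSet X μ) ∩ interior (integrableExpSet Y μ')} :=
    ((convex_integrableExpSet.interior.inter convex_integrableExpSet.interior).linear_preimage
      Complex.reLm).isPreconnected
  have real_eq : ∃ᶠ t : ℝ in 𝓝[≠] t₀, complexMGF X μ t = complexMGF Y μ' t := by
    refine (hXY.filter_mono nhdsWithin_le_nhds).frequently.mono fun t ht => ?_
    rw [complexMGF_ofReal, complexMGF_ofReal, ht]
  have tendsto_ofReal : Tendsto ((↑) : ℝ → ℂ) (𝓝[≠] t₀) (𝓝[≠] (t₀ : ℂ)) :=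
    Complex.continuous_ofReal.continuousWithinAt.tendsto_nhdsWithin
      fun _ => Complex.ofReal_injective.ne
  exact (analyticOnNhd_complexMGF.mono fun z hz => hz.1).eqOn_of_preconnected_of_frequently_eq
    (analyticOnNhd_complexMGF.mono fun z hz => hz.2) strip_preconnected ⟨hX, hY⟩
    (tendsto_ofReal.frequently real_eq)

theorem charFunDual_eq_complexMGF_I {E : Type*} [NormedAddCommGroup E] [NormedSpace ℝ E]
    [MeasurableSpace E] (μ : Measure E) (L : StrongDual ℝ E) :
    charFunDual μ L = complexMGF L μ Complex.I := by
  simp only [charFunDual_apply, complexMGF, mul_comm]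

theorem measure_ext_of_mgf_dual_eventuallyEq {E : Type*} [NormedAddCommGroup E] [NormedSpace ℝ E]
    [CompleteSpace E] [SecondCountableTopology E] [MeasurableSpace E] [BorelSpace E]
    {μ ν : Measure E} [IsFiniteMeasure μ] [IsFiniteMeasure ν]
    (hμ : ∀ L : StrongDual ℝ E, 0 ∈ interior (integrableExpSet L μ))
    (hν : ∀ L : StrongDual ℝ E, 0 ∈ interior (integrableExpSet L ν))
    (h : ∀ L : StrongDual ℝ E, mgf L μ =ᶠ[𝓝 0] mgf L ν) : μ = ν := by
  refine Measure.ext_of_charFunDual (funext fun L => ?_)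
  rw [charFunDual_eq_complexMGF_I, charFunDual_eq_complexMGF_I]
  exact eqOn_complexMGF_of_mgf_eventuallyEq (hμ L) (hν L) (h L)
    (by simpa using ⟨hμ L, hν L⟩)

end MGF

section SignedDensity

open ENNReal

variable {α F : Type*} {mα : MeasurableSpace α} {μ : Measure α} [NormedAddCommGroup F]
  [NormedSpace ℝ F] {f : α → ℝ} {G : α → F}

theorem integrable_max_zero_smul (hf : AEMeasurable f μ)
    (hfG : Integrable (fun x => f x • G x) μ) : Integrable (fun x => max (f x) 0 • G x) μ := by
  have hpos : NullMeasurableSet {x | 0 < f x} μ := nullMeasurableSet_lt aemeasurable_const hf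
  refine (hfG.indicator₀ hpos).congr (.of_forall fun x => ?_)
  by_cases hx : 0 < f x
  · simp [hx, hx.le]
  · simp [hx, not_lt.1 hx]

theorem integrable_withDensity_ofReal (hf : AEMeasurable f μ)
    (hfG : Integrable (fun x => f x • G x) μ) :
    Integrable G (μ.withDensity fun x => .ofReal (f x)) := by
  rw [integrable_withDensity_iff_integrable_smul₀' hf.ennreal_ofReal (by simp)]
  simpa only [toReal_ofReal'] using integrable_max_zero_smul hf hfG

theorem integral_withDensity_ofReal_sub_neg (hf : AEMeasurable f μ)
    (hfG : Integrable (fun x => f x • G x) μ) :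
    ∫ x, G x ∂μ.withDensity (fun x => .ofReal (f x)) -
      ∫ x, G x ∂μ.withDensity (fun x => .ofReal (-f x)) = ∫ x, f x • G x ∂μ := by
  have hf_neg : AEMeasurable (fun x => -f x) μ := hf.neg
  have hfG_neg : Integrable (fun x => -f x • G x) μ := by simpa only [neg_smul] using hfG.fun_neg
  rw [integral_withDensity_eq_integral_toReal_smul₀ hf.ennreal_ofReal (by simp),
    integral_withDensity_eq_integral_toReal_smul₀ hf_neg.ennreal_ofReal (by simp)]
  simp only [toReal_ofReal']
  rw [← integral_sub (integrable_max_zero_smul hf hfG) (integrable_max_zero_smul hf_neg hfG_neg)]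
  simp only [← sub_smul, max_zero_sub_max_neg_zero_eq_self]

theorem ae_eq_zero_of_withDensity_ofReal_eq (hf : Integrable f μ)
    (h : μ.withDensity (fun x => .ofReal (f x)) = μ.withDensity fun x => .ofReal (-f x)) :
    f =ᵐ[μ] 0 := by
  have hpos_neg := (withDensity_eq_iff hf.1.aemeasurable.ennreal_ofReal
    hf.1.aemeasurable.neg.ennreal_ofReal hf.lintegral_lt_top.ne).1 h
  filter_upwards [hpos_neg] with x hx
  have hmax : max (f x) 0 = max (-f x) 0 := by
    simpa only [toReal_ofReal', Pi.neg_apply] using congrArg ENNReal.toReal hx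
  rw [← max_zero_sub_max_neg_zero_eq_self (f x), hmax, sub_self, Pi.zero_apply]

end SignedDensity

section LaplaceTransform

open ProbabilityTheory Topology

variable {E : Type*} [NormedAddCommGroup E] [NormedSpace ℝ E] [MeasurableSpace E]
  {μ : Measure E} {f : E → ℝ}

theorem zero_mem_interior_integrableExpSet_withDensity_ofReal (hf : AEMeasurable f μ)
    {L : StrongDual ℝ E}
    (hint : ∀ᶠ s : ℝ in 𝓝 0, Integrable (fun x => f x * Real.exp (s * L x)) μ) :
    0 ∈ interior (integrableExpSet L (μ.withDensity fun x => .ofReal (f x))) :=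
  mem_interior_iff_mem_nhds.2 (hint.mono fun _ => integrable_withDensity_ofReal hf)

theorem ae_eq_zero_of_eventually_integral_mul_exp_dual_eq_zero [CompleteSpace E]
    [SecondCountableTopology E] [BorelSpace E]
    (hint : ∀ L : StrongDual ℝ E, ∀ᶠ s : ℝ in 𝓝 0,
      Integrable (fun x => f x * Real.exp (s * L x)) μ)
    (hzero : ∀ L : StrongDual ℝ E, ∀ᶠ s : ℝ in 𝓝 0, ∫ x, f x * Real.exp (s * L x) ∂μ = 0) :
    f =ᵐ[μ] 0 := by
  have hf : Integrable f μ := by simpa using (hint 0).self_of_nhds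
  have hfm : AEMeasurable f μ := hf.aemeasurable
  have hint_neg (L : StrongDual ℝ E) :
      ∀ᶠ s : ℝ in 𝓝 0, Integrable (fun x => -f x * Real.exp (s * L x)) μ := by
    simpa only [neg_mul] using (hint L).mono fun _ h => h.fun_neg
  have := isFiniteMeasure_withDensity_ofReal hf.2
  have := isFiniteMeasure_withDensity_ofReal hf.neg.2
  refine ae_eq_zero_of_withDensity_ofReal_eq hf (measure_ext_of_mgf_dual_eventuallyEq
    (fun L => zero_mem_interior_integrableExpSet_withDensity_ofReal hfm (hint L))
    (fun L => zero_mem_interior_integrableExpSet_withDensity_ofReal hfm.neg (hint_neg L))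
    fun L => ?_)
  filter_upwards [hint L, hzero L] with s hs hs_zero
  rw [← sub_eq_zero, mgf, mgf]
  exact (integral_withDensity_ofReal_sub_neg hfm hs).trans hs_zero

end LaplaceTransform

section GaussianLocation

open ProbabilityTheory Topology

theorem stdNormalPDF_sub_eq_gaussianPDFReal (t m : ℝ) :
    stdNormalPDF (t - m) = gaussianPDFReal m 1 t := by
  simp [stdNormalPDF, gaussianPDFReal]

theorem stdNormalPDF_pos (t : ℝ) : 0 < stdNormalPDF t := by
  unfold stdNormalPDF
  positivity

theorem stdNormalPDF_sub_mul_exp (t m a : ℝ) :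
    stdNormalPDF (t - m) * Real.exp (a * t) =
      Real.exp (a * m + a ^ 2 / 2) * stdNormalPDF (t - (m + a)) := by
  simp only [stdNormalPDF]
  rw [mul_left_comm, mul_assoc, ← Real.exp_add, ← Real.exp_add]
  ring_nf

variable {ι : Type*} [Fintype ι]

theorem integrable_prod_stdNormalPDF_sub (m : ι → ℝ) :
    Integrable fun t : ι → ℝ => ∏ i, stdNormalPDF (t i - m i) := by
  simp only [stdNormalPDF_sub_eq_gaussianPDFReal]
  exact Integrable.fintype_prod fun i => integrable_gaussianPDFReal (m i) 1

theorem prod_stdNormalPDF_sub_mul_exp_sum (t m a : ι → ℝ) :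
    (∏ i, stdNormalPDF (t i - m i)) * Real.exp (∑ i, a i * t i) =
      Real.exp (∑ i, (a i * m i + a i ^ 2 / 2)) * ∏ i, stdNormalPDF (t i - (m i + a i)) := by
  simp only [Real.exp_sum, ← Finset.prod_mul_distrib, stdNormalPDF_sub_mul_exp]

theorem prod_stdNormalPDF_sub_mul_exp_dual [DecidableEq ι] (L : StrongDual ℝ (ι → ℝ))
    (t m : ι → ℝ) :
    (∏ i, stdNormalPDF (t i - m i)) * Real.exp (L t) =
      Real.exp (∑ i, (L (Pi.single i 1) * m i + L (Pi.single i 1) ^ 2 / 2)) *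
        ∏ i, stdNormalPDF (t i - (m i + L (Pi.single i 1))) := by
  have hL : L t = ∑ i, L (Pi.single i 1) * t i := by
    conv_lhs => rw [pi_eq_sum_univ' t, map_sum]
    simp only [map_smul, smul_eq_mul, mul_comm]
  rw [hL, prod_stdNormalPDF_sub_mul_exp_sum t m fun i => L (Pi.single i 1)]

theorem gaussian_location_bounded_complete_multivariate_general {μ : Measure (ι → ℝ)}
    {g : (ι → ℝ) → ℝ} {M : Set (ι → ℝ)} (hM : (interior M).Nonempty)
    (hint : ∀ m ∈ M, Integrable (fun t => g t * ∏ i, stdNormalPDF (t i - m i)) μ)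
    (hzero : ∀ m ∈ M, ∫ t, g t * ∏ i, stdNormalPDF (t i - m i) ∂μ = 0) :
    ∀ᵐ t ∂μ, g t = 0 := by
  classical
  obtain ⟨m₀, hm₀⟩ := hM
  let f (t : ι → ℝ) : ℝ := g t * ∏ i, stdNormalPDF (t i - m₀ i)
  have shift_mem (L : StrongDual ℝ (ι → ℝ)) :
      ∀ᶠ s : ℝ in 𝓝 0, (fun i => m₀ i + (s • L) (Pi.single i 1)) ∈ M := by
    refine ContinuousAt.eventually_mem ?_ (by simpa using mem_interior_iff_mem_nhds.1 hm₀)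
    simp only [FunLike.coe_smul, Pi.smul_apply]
    fun_prop
  have tilt (L : StrongDual ℝ (ι → ℝ)) : ∃ c : ℝ, ∀ t,
      f t * Real.exp (L t) = c * (g t * ∏ i, stdNormalPDF (t i - (m₀ i + L (Pi.single i 1)))) :=
    ⟨_, fun t => by rw [mul_assoc, prod_stdNormalPDF_sub_mul_exp_dual, mul_left_comm]⟩
  have f_ae_zero : f =ᵐ[μ] 0 := by
    refine ae_eq_zero_of_eventually_integral_mul_exp_dual_eq_zero (fun L => ?_) fun L => ?_ <;>
      filter_upwards [shift_mem L] with s hs <;> obtain ⟨c, hc⟩ := tilt (s • L)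
    · exact ((hint _ hs).const_mul c).congr (.of_forall fun t => (hc t).symm)
    · exact (integral_congr_ae (.of_forall hc)).trans
        (by rw [integral_const_mul, hzero _ hs, mul_zero])
  filter_upwards [f_ae_zero] with t ht
  exact (mul_eq_zero.1 ht).resolve_right (Finset.prod_pos fun i _ => stdNormalPDF_pos _).ne'

end GaussianLocation

/-- bounded completeness of the product Gaussian location family
on `ℝ^d`. If a bounded measurable `g : ℝ^d → ℝ` integrates to zero against every
product normal density `∏ i, φ(t i − m i)` with `m` ranging over a set with
nonempty interior, then `g = 0` Lebesgue-almost everywhere. -/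
theorem gaussian_location_bounded_complete_multivariate
    {d : ℕ} (hd : 1 ≤ d)
    (g : (Fin d → ℝ) → ℝ) (hgm : Measurable g) (hgb : ∃ C : ℝ, ∀ t, |g t| ≤ C)
    (M : Set (Fin d → ℝ)) (hM : (interior M).Nonempty)
    (hzero : ∀ m ∈ M,
      ∫ t : Fin d → ℝ, g t * ∏ i : Fin d, stdNormalPDF (t i - m i) = 0) :
    ∀ᵐ t : Fin d → ℝ ∂volume, g t = 0 := by
  obtain ⟨C, hC⟩ := hgb
  exact gaussian_location_bounded_complete_multivariate_general hM
    (fun m _ => (integrable_prod_stdNormalPDF_sub m).bdd_mul hgm.aestronglyMeasurable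
      (.of_forall hC)) hzero
end

section
/- Let F : ℝ → ℝ be a bounded Lebesgue-measurable function and β_0, β_1 ∈ ℝ. Define η̃ : ℝ × (ℝ∖{0}) → ℝ by η̃(z_1, z_2) = ∫_ℝ F(t) φ(t/z_2 − β_0 − β_1 z_1) dt, where φ(t) = (2π)^{-1/2} exp(−t²/2) is the standard normal density. Then η̃ is continuously differentiable to all orders on ℝ × (ℝ∖{0}), its partial derivatives satisfy ∂_{z_1} η̃(z_1,z_2) = −β_1 ∫ F(t) φ'(t/z_2 − β_0 − β_1 z_1) dt and ∂_{z_2} η̃(z_1,z_2) = −z_2^{-2} ∫ F(t) t φ'(t/z_2 − β_0 − β_1 z_1) dt, and η̃ satisfies the partial differential equation ∂²_{z_1 z_1} η̃(z_1,z_2) = −β_1² η̃(z_1,z_2) − β_1(β_0 + β_1 z_1) ∂_{z_1} η̃(z_1,z_2) + β_1² z_2 ∂_{z_2} η̃(z_1,z_2) for all (z_1,z_2) ∈ ℝ × (ℝ∖{0}). -/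
/-!
With `φ` the Gaussian density, `η̃(z₁, z₂)` is the value at `(a, b) = (z₂⁻¹, β₀ + β₁ z₁)` of the
pairing `∫ F(t) ψ(a t - b) dt` with `ψ = φ`. For `a ≠ 0` the substitution `t ↦ a t - b` stretches
the line by a locally bounded factor, so the decay of a Schwartz `ψ` dominates these integrands
locally uniformly in `(a, b)`, and one may differentiate under the integral: `∂_a` replaces `(F, ψ)`
by `(t F, ψ')` and `∂_b` replaces it by `(F, -ψ')`. The class of pairs is stable under both
operations, whence smoothness, and the differential equation is the identity
`φ''(x) = -φ(x) - x φ'(x)` evaluated at `x = a t - b` and integrated against `F`.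
-/

open MeasureTheory

open Filter Topology
open SchwartzMap (derivCLM)
open scoped SchwartzMap ContDiff

section Tempered

variable {F : ℝ → ℝ} {μ : Measure ℝ}

/-- `F` is *tempered* with respect to `μ` if dividing it by some power of `1 + |t|` makes it
`μ`-integrable. This is the growth condition under which `F` pairs with Schwartz functions. -/
def IsTempered (F : ℝ → ℝ) (μ : Measure ℝ) : Prop :=
  ∃ k : ℕ, Integrable (fun t => ((1 + |t|) ^ k)⁻¹ * F t) μ

lemma isTempered_of_bounded [μ.HasTemperateGrowth] {C : ℝ} (hFm : AEStronglyMeasurable F μ)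
    (hFb : ∀ᵐ t ∂μ, |F t| ≤ C) : IsTempered F μ := by
  obtain ⟨k, hk⟩ := Measure.HasTemperateGrowth.exists_integrable (μ := μ)
  refine ⟨k, Integrable.mul_bdd (c := C) ?_ hFm hFb⟩
  simpa only [Real.rpow_neg_natCast, zpow_neg, zpow_natCast, Real.norm_eq_abs] using hk

namespace IsTempered

lemma aestronglyMeasurable (hF : IsTempered F μ) : AEStronglyMeasurable F μ := by
  obtain ⟨k, hk⟩ := hF
  have hw : Measurable fun t : ℝ => (1 + |t|) ^ k := by fun_prop
  refine (hw.aestronglyMeasurable.mul hk.aestronglyMeasurable).congr (.of_forall fun t => ?_)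
  exact mul_inv_cancel_left₀ (by positivity) _

lemma mul_of_abs_le_one_add_abs {g : ℝ → ℝ} (hF : IsTempered F μ) (hgm : AEStronglyMeasurable g μ)
    (hg : ∀ t, |g t| ≤ 1 + |t|) : IsTempered (fun t => F t * g t) μ := by
  obtain ⟨k, hk⟩ := hF
  refine ⟨k + 1, (hk.mul_bdd (g := fun t => (1 + |t|)⁻¹ * g t) (c := 1) ?_ ?_).congr ?_⟩
  · exact (Measurable.aestronglyMeasurable (by fun_prop)).mul hgm
  · refine .of_forall fun t => ?_
    rw [Real.norm_eq_abs, abs_mul, abs_inv, abs_of_pos (by positivity : 0 < 1 + |t|),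
      inv_mul_le_one₀ (by positivity)]
    exact hg t
  · exact .of_forall fun t => by simp only [pow_succ, mul_inv]; ring

lemma mul_id (hF : IsTempered F μ) : IsTempered (fun t => F t * t) μ :=
  hF.mul_of_abs_le_one_add_abs aestronglyMeasurable_id fun t => by linarith

end IsTempered

end Tempered

section AffineIntegral

variable {E : Type*} [NormedAddCommGroup E] [NormedSpace ℝ E] {F : ℝ → ℝ} {μ : Measure ℝ}
  {p : ℝ × ℝ}

lemma one_add_abs_le_mul_one_add_abs_affine {a b δ M : ℝ} (hδ : 0 < δ) (ha : δ ≤ |a|)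
    (hb : |b| ≤ M) (t : ℝ) : 1 + |t| ≤ (1 + (1 + M) / δ) * (1 + |a * t - b|) := by
  have hM : 0 ≤ M := (abs_nonneg b).trans hb
  have hδt : δ * |t| ≤ |a * t - b| + M := calc
    δ * |t| ≤ |a| * |t| := by gcongr
    _ = |a * t - b + b| := by rw [sub_add_cancel, abs_mul]
    _ ≤ |a * t - b| + M := (abs_add_le _ _).trans (by gcongr)
  calc 1 + |t| ≤ 1 + (|a * t - b| + M) / δ := by gcongr; rwa [le_div_iff₀' hδ]
    _ ≤ 1 + (|a * t - b| + M) / δ + (|a * t - b| + (1 + M * |a * t - b|) / δ) :=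
      le_add_of_nonneg_right (by positivity)
    _ = (1 + (1 + M) / δ) * (1 + |a * t - b|) := by ring

lemma exists_eventually_weight_mul_norm_affine_le (ψ : 𝓢(ℝ, E)) (k : ℕ)
    (hp : p.1 ≠ 0) :
    ∃ C, ∀ᶠ q in 𝓝 p, ∀ t, (1 + |t|) ^ k * ‖ψ (q.1 * t - q.2)‖ ≤ C := by
  obtain ⟨C, hC⟩ : ∃ C, ∀ x, (1 + |x|) ^ k * ‖ψ x‖ ≤ C := ⟨_, fun x => by
    simpa using SchwartzMap.one_add_le_sup_seminorm_apply (𝕜 := ℝ) (m := (k, 0)) le_rfl le_rfl ψ x⟩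
  set K := 1 + (1 + (|p.2| + 1)) / (|p.1| / 2)
  have hfst : ∀ᶠ q : ℝ × ℝ in 𝓝 p, |p.1| / 2 < |q.1| :=
    continuous_fst.abs.continuousAt.eventually_const_lt (half_lt_self (abs_pos.mpr hp))
  have hsnd : ∀ᶠ q : ℝ × ℝ in 𝓝 p, |q.2| < |p.2| + 1 :=
    continuous_snd.abs.continuousAt.eventually_lt_const (lt_add_one _)
  refine ⟨K ^ k * C, ?_⟩
  filter_upwards [hfst, hsnd] with q hq₁ hq₂ t
  calc (1 + |t|) ^ k * ‖ψ (q.1 * t - q.2)‖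
      ≤ (K * (1 + |q.1 * t - q.2|)) ^ k * ‖ψ (q.1 * t - q.2)‖ := by
        gcongr
        exact one_add_abs_le_mul_one_add_abs_affine (by positivity) hq₁.le hq₂.le t
    _ = K ^ k * ((1 + |q.1 * t - q.2|) ^ k * ‖ψ (q.1 * t - q.2)‖) := by rw [mul_pow, mul_assoc]
    _ ≤ K ^ k * C := by gcongr; exact hC _

lemma IsTempered.exists_integrable_eventually_norm_smul_affine_le (hF : IsTempered F μ)
    (ψ : 𝓢(ℝ, E)) (hp : p.1 ≠ 0) :
    ∃ bound : ℝ → ℝ, Integrable bound μ ∧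
      ∀ᶠ q in 𝓝 p, ∀ t, ‖F t • ψ (q.1 * t - q.2)‖ ≤ bound t := by
  obtain ⟨k, hk⟩ := hF
  obtain ⟨C, hC⟩ := exists_eventually_weight_mul_norm_affine_le ψ k hp
  refine ⟨_, hk.norm.mul_const C, hC.mono fun q hq t => ?_⟩
  calc ‖F t • ψ (q.1 * t - q.2)‖
      = ‖((1 + |t|) ^ k)⁻¹ * F t‖ * ((1 + |t|) ^ k * ‖ψ (q.1 * t - q.2)‖) := by
        rw [norm_smul, norm_mul, norm_inv, Real.norm_of_nonneg (by positivity : 0 ≤ (1 + |t|) ^ k)]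
        field_simp
    _ ≤ ‖((1 + |t|) ^ k)⁻¹ * F t‖ * C := by gcongr; exact hq t

lemma IsTempered.aestronglyMeasurable_smul_affine (hF : IsTempered F μ) (ψ : 𝓢(ℝ, E))
    (p : ℝ × ℝ) : AEStronglyMeasurable (fun t => F t • ψ (p.1 * t - p.2)) μ :=
  hF.aestronglyMeasurable.smul (ψ.continuous.comp (by fun_prop)).aestronglyMeasurable

lemma IsTempered.integrable_smul_affine (hF : IsTempered F μ) (ψ : 𝓢(ℝ, E)) (hp : p.1 ≠ 0) :
    Integrable (fun t => F t • ψ (p.1 * t - p.2)) μ := by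
  obtain ⟨bound, hbound, hle⟩ := hF.exists_integrable_eventually_norm_smul_affine_le ψ hp
  exact hbound.mono' (hF.aestronglyMeasurable_smul_affine ψ p) (.of_forall hle.self_of_nhds)

/-- The pairing of `F` with the affine reparametrization `t ↦ ψ (a * t - b)` of a Schwartz
function, as a function of `p = (a, b)`. -/
noncomputable def affineIntegral (μ : Measure ℝ) (F : ℝ → ℝ) (ψ : 𝓢(ℝ, E)) (p : ℝ × ℝ) : E :=
  ∫ t, F t • ψ (p.1 * t - p.2) ∂μ

lemma hasFDerivAt_schwartz_comp_affine (ψ : 𝓢(ℝ, E)) (t : ℝ) (p : ℝ × ℝ) :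
    HasFDerivAt (fun q : ℝ × ℝ => ψ (q.1 * t - q.2))
      ((t • ContinuousLinearMap.fst ℝ ℝ ℝ - ContinuousLinearMap.snd ℝ ℝ ℝ).smulRight
        (derivCLM ℝ E ψ (p.1 * t - p.2))) p :=
  (ψ.hasDerivAt _).hasFDerivAt.comp p ((hasFDerivAt_fst.mul_const t).sub hasFDerivAt_snd)
    |>.congr_fderiv (by ext <;> simp)

lemma norm_smul_fst_sub_snd_le (t : ℝ) :
    ‖t • ContinuousLinearMap.fst ℝ ℝ ℝ - ContinuousLinearMap.snd ℝ ℝ ℝ‖ ≤ 1 + |t| := calc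
  _ ≤ |t| * ‖ContinuousLinearMap.fst ℝ ℝ ℝ‖ + ‖ContinuousLinearMap.snd ℝ ℝ ℝ‖ :=
    (norm_sub_le _ _).trans_eq (by rw [norm_smul, Real.norm_eq_abs])
  _ ≤ |t| * 1 + 1 := by
    gcongr
    exacts [ContinuousLinearMap.norm_fst_le .., ContinuousLinearMap.norm_snd_le ..]
  _ = 1 + |t| := by ring

lemma IsTempered.hasFDerivAt_affineIntegral (hF : IsTempered F μ) (ψ : 𝓢(ℝ, E)) (hp : p.1 ≠ 0) :
    HasFDerivAt (affineIntegral μ F ψ)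
      ((ContinuousLinearMap.fst ℝ ℝ ℝ).smulRight
          (affineIntegral μ (fun t => F t * t) (derivCLM ℝ E ψ) p) -
        (ContinuousLinearMap.snd ℝ ℝ ℝ).smulRight
          (affineIntegral μ F (derivCLM ℝ E ψ) p)) p := by
  set ψ' := derivCLM ℝ E ψ
  let L (t : ℝ) : ℝ × ℝ →L[ℝ] ℝ :=
    t • ContinuousLinearMap.fst ℝ ℝ ℝ - ContinuousLinearMap.snd ℝ ℝ ℝ
  have hF₁ : IsTempered (fun t => F t * (1 + |t|)) μ :=
    hF.mul_of_abs_le_one_add_abs (Measurable.aestronglyMeasurable (by fun_prop))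
      fun t => (abs_of_pos (by positivity)).le
  obtain ⟨bound, hbound, hle⟩ := hF₁.exists_integrable_eventually_norm_smul_affine_le ψ' hp
  let D (q : ℝ × ℝ) (t : ℝ) : ℝ × ℝ →L[ℝ] E := F t • (L t).smulRight (ψ' (q.1 * t - q.2))
  have hDmeas : AEStronglyMeasurable (D p) μ := by
    have hψ' : Continuous fun t => (L t).smulRight (ψ' (p.1 * t - p.2)) := by fun_prop
    exact hF.aestronglyMeasurable.smul hψ'.aestronglyMeasurable
  have hDle (q : ℝ × ℝ) (t : ℝ) : ‖D q t‖ ≤ ‖(F t * (1 + |t|)) • ψ' (q.1 * t - q.2)‖ := by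
    rw [norm_smul, ContinuousLinearMap.norm_smulRight_apply, norm_smul, norm_mul, mul_assoc,
      Real.norm_of_nonneg (by positivity : 0 ≤ 1 + |t|)]
    gcongr
    exact norm_smul_fst_sub_snd_le t
  have hD := hasFDerivAt_integral_of_dominated_of_fderiv_le hle
    (.of_forall (hF.aestronglyMeasurable_smul_affine ψ)) (hF.integrable_smul_affine ψ hp) hDmeas
    (.of_forall fun t q hq => (hDle q t).trans (hq t)) hbound
    (.of_forall fun t q _ => (hasFDerivAt_schwartz_comp_affine ψ t q).const_smul (F t))
  refine hD.congr_fderiv ?_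
  have hDint : Integrable (D p) μ :=
    hbound.mono' hDmeas (.of_forall fun t => (hDle p t).trans (hle.self_of_nhds t))
  ext <;>
    simp [ContinuousLinearMap.integral_apply hDint, D, L, affineIntegral, mul_smul, integral_neg]

lemma IsTempered.contDiffOn_affineIntegral (hF : IsTempered F μ) (ψ : 𝓢(ℝ, E)) :
    ContDiffOn ℝ ∞ (affineIntegral μ F ψ) {p | p.1 ≠ 0} := by
  refine contDiffOn_infty.mpr fun n => ?_
  induction n generalizing F ψ with
  | zero =>
    exact contDiffOn_zero.mpr fun p hp =>
      (hF.hasFDerivAt_affineIntegral ψ hp).continuousAt.continuousWithinAt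
  | succ n ih =>
    have hopen : IsOpen {p : ℝ × ℝ | p.1 ≠ 0} := isOpen_ne_fun continuous_fst continuous_const
    rw [Nat.cast_succ, contDiffOn_succ_iff_fderiv_of_isOpen hopen]
    refine ⟨fun p hp => (hF.hasFDerivAt_affineIntegral ψ hp).differentiableAt
      |>.differentiableWithinAt, by simp, ?_⟩
    refine ContDiffOn.congr ?_ fun p hp => (hF.hasFDerivAt_affineIntegral ψ hp).fderiv
    exact (contDiffOn_const.smulRight (ih hF.mul_id _)).sub (contDiffOn_const.smulRight (ih hF _))

lemma IsTempered.hasDerivAt_affineIntegral_add_mul (hF : IsTempered F μ) (ψ : 𝓢(ℝ, E)) {a : ℝ}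
    (ha : a ≠ 0) (b c s : ℝ) :
    HasDerivAt (fun u => affineIntegral μ F ψ (a, b + c * u))
      (-c • affineIntegral μ F (derivCLM ℝ E ψ) (a, b + c * s)) s := by
  have hline : HasDerivAt (fun u => b + c * u) c s := by
    simpa using ((hasDerivAt_id s).const_mul c).const_add b
  have hI := hF.hasFDerivAt_affineIntegral ψ (p := (a, b + c * s)) ha
  refine (hI.comp_hasDerivAt s ((hasDerivAt_const s a).prodMk hline)).congr_deriv ?_
  simp

lemma IsTempered.hasDerivAt_affineIntegral_inv (hF : IsTempered F μ) (ψ : 𝓢(ℝ, E)) {s : ℝ}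
    (hs : s ≠ 0) (b : ℝ) :
    HasDerivAt (fun u => affineIntegral μ F ψ (u⁻¹, b))
      (-(s ^ 2)⁻¹ • affineIntegral μ (fun t => F t * t) (derivCLM ℝ E ψ) (s⁻¹, b)) s := by
  have hI := hF.hasFDerivAt_affineIntegral ψ (p := (s⁻¹, b)) (inv_ne_zero hs)
  refine (hI.comp_hasDerivAt s ((hasDerivAt_inv hs).prodMk (hasDerivAt_const s b))).congr_deriv ?_
  simp

lemma affineIntegral_inv_add (μ : Measure ℝ) (F : ℝ → ℝ) (ψ : 𝓢(ℝ, E)) (a b c : ℝ) :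
    affineIntegral μ F ψ (a⁻¹, b + c) = ∫ t, F t • ψ (t / a - b - c) ∂μ := by
  simp only [affineIntegral, div_eq_inv_mul, sub_sub]

end AffineIntegral

section Gaussian

open Polynomial in
lemma exists_abs_eval_mul_exp_neg_sq_div_two_le (P : ℝ[X]) :
    ∃ C, ∀ x, |P.eval x * Real.exp (-(x ^ 2 / 2))| ≤ C := by
  induction P using Polynomial.induction_on' with
  | add P Q hP hQ =>
    obtain ⟨A, hA⟩ := hP
    obtain ⟨B, hB⟩ := hQ
    refine ⟨A + B, fun x => ?_⟩
    rw [eval_add, add_mul]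
    exact (abs_add_le _ _).trans (add_le_add (hA x) (hB x))
  | monomial n a =>
    have hlim : Tendsto (fun x : ℝ => |x| ^ n * Real.exp (-(x ^ 2 / 2))) (cocompact ℝ) (𝓝 0) := by
      simpa [neg_mul, inv_mul_eq_div] using
        tendsto_rpow_abs_mul_exp_neg_mul_sq_cocompact one_half_pos n
    have hbdd := (Continuous.isBounded_range_iff_isBigO (by fun_prop)).mpr (hlim.isBigO_one ℝ)
    obtain ⟨C, hC⟩ := hbdd.exists_norm_le
    refine ⟨|a| * C, fun x => ?_⟩
    have hx := hC _ (Set.mem_range_self x)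
    rw [norm_mul, norm_pow, Real.norm_eq_abs, Real.norm_eq_abs, abs_abs] at hx
    rw [eval_monomial, mul_assoc, abs_mul, abs_mul, abs_pow]
    gcongr

/-- The Gaussian `exp (-x² / 2)` as a Schwartz function. -/
noncomputable def gaussianSchwartz : 𝓢(ℝ, ℝ) where
  toFun x := Real.exp (-(x ^ 2 / 2))
  smooth' := by fun_prop
  decay' k n := by
    obtain ⟨C, hC⟩ := exists_abs_eval_mul_exp_neg_sq_div_two_le
      (Polynomial.X ^ k * (Polynomial.hermite n).map (Int.castRingHom ℝ))
    refine ⟨C, fun x => le_of_eq_of_le ?_ (hC x)⟩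
    rw [norm_iteratedFDeriv_eq_norm_iteratedDeriv, iteratedDeriv_eq_iterate,
      Polynomial.deriv_gaussian_eq_hermite_mul_gaussian, Polynomial.aeval_def]
    simp [Polynomial.eval_map, abs_mul, mul_assoc]

/-- The standard normal density as a Schwartz function. -/
noncomputable def stdNormalSchwartz : 𝓢(ℝ, ℝ) :=
  (Real.sqrt (2 * Real.pi))⁻¹ • gaussianSchwartz

lemma coe_stdNormalSchwartz : ⇑stdNormalSchwartz = stdNormalPDF := by
  ext x
  change _ * Real.exp (-(x ^ 2 / 2)) = _ * Real.exp (-x ^ 2 / 2)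
  rw [neg_div]

lemma hasDerivAt_stdNormalPDF (x : ℝ) : HasDerivAt stdNormalPDF (-x * stdNormalPDF x) x := by
  have hexp : HasDerivAt (fun t : ℝ => -t ^ 2 / 2) (-x) x :=
    ((hasDerivAt_pow 2 x).neg.div_const 2).congr_deriv (by norm_num; ring)
  exact (hexp.exp.const_mul _).congr_deriv (by rw [stdNormalPDF]; ring)

lemma deriv_deriv_stdNormalPDF (x : ℝ) :
    deriv (deriv stdNormalPDF) x = -stdNormalPDF x - x * deriv stdNormalPDF x := by
  have hderiv : deriv stdNormalPDF = fun t => -t * stdNormalPDF t :=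
    funext fun t => (hasDerivAt_stdNormalPDF t).deriv
  have hmul : HasDerivAt (fun t => -t * stdNormalPDF t) _ x :=
    (hasDerivAt_neg x).mul (hasDerivAt_stdNormalPDF x)
  rw [hderiv, hmul.deriv]
  ring

variable {F : ℝ → ℝ} {μ : Measure ℝ}

lemma IsTempered.affineIntegral_deriv_deriv_stdNormalSchwartz (hF : IsTempered F μ) {a : ℝ}
    (ha : a ≠ 0) (b : ℝ) :
    affineIntegral μ F (derivCLM ℝ ℝ (derivCLM ℝ ℝ stdNormalSchwartz)) (a, b) =
      -affineIntegral μ F stdNormalSchwartz (a, b)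
        + b * affineIntegral μ F (derivCLM ℝ ℝ stdNormalSchwartz) (a, b)
        - a * affineIntegral μ (fun t => F t * t) (derivCLM ℝ ℝ stdNormalSchwartz) (a, b) := by
  set φ := stdNormalSchwartz
  set φ' := derivCLM ℝ ℝ φ
  have hφ'' (x : ℝ) : derivCLM ℝ ℝ φ' x = -φ x - x * φ' x := by
    change deriv (deriv φ) x = -φ x - x * deriv φ x
    rw [coe_stdNormalSchwartz, deriv_deriv_stdNormalPDF]
  have hIφ : Integrable (fun t => -(F t • φ (a * t - b))) μ :=
    (hF.integrable_smul_affine φ (p := (a, b)) ha).neg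
  have hIφ' : Integrable (fun t => b * F t • φ' (a * t - b)) μ :=
    (hF.integrable_smul_affine φ' (p := (a, b)) ha).const_mul b
  have hItφ' : Integrable (fun t => a * (F t * t) • φ' (a * t - b)) μ :=
    (hF.mul_id.integrable_smul_affine φ' (p := (a, b)) ha).const_mul a
  simp only [affineIntegral]
  rw [← integral_neg, ← integral_const_mul, ← integral_const_mul, ← integral_add hIφ hIφ',
    ← integral_sub (hIφ.fun_add hIφ') hItφ']
  congr 1 with t
  rw [hφ'']
  simp only [smul_eq_mul]
  ring

end Gaussian

theorem eta_pde_general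
    {F : ℝ → ℝ} {μ : Measure ℝ} (hF : IsTempered F μ) (β₀ β₁ : ℝ) (η : ℝ → ℝ → ℝ)
    (hη : ∀ z₁ z₂ : ℝ, η z₁ z₂ = ∫ t : ℝ, F t * stdNormalPDF (t / z₂ - β₀ - β₁ * z₁) ∂μ) :
    ContDiffOn ℝ (⊤ : ℕ∞) (fun p : ℝ × ℝ => η p.1 p.2) {p : ℝ × ℝ | p.2 ≠ 0} ∧
    (∀ z₁ z₂ : ℝ, z₂ ≠ 0 →
      deriv (fun s => η s z₂) z₁ =
        -β₁ * ∫ t : ℝ, F t * deriv stdNormalPDF (t / z₂ - β₀ - β₁ * z₁) ∂μ) ∧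
    (∀ z₁ z₂ : ℝ, z₂ ≠ 0 →
      deriv (fun s => η z₁ s) z₂ =
        -(z₂ ^ 2)⁻¹ * ∫ t : ℝ, F t * t * deriv stdNormalPDF (t / z₂ - β₀ - β₁ * z₁) ∂μ) ∧
    (∀ z₁ z₂ : ℝ, z₂ ≠ 0 →
      deriv (deriv (fun s => η s z₂)) z₁ =
        -β₁ ^ 2 * η z₁ z₂ - β₁ * (β₀ + β₁ * z₁) * deriv (fun s => η s z₂) z₁
          + β₁ ^ 2 * z₂ * deriv (fun s => η z₁ s) z₂) := by
  set φ := stdNormalSchwartz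
  obtain rfl : η = fun z₁ z₂ => affineIntegral μ F φ (z₂⁻¹, β₀ + β₁ * z₁) := by
    ext z₁ z₂
    rw [hη, affineIntegral_inv_add, coe_stdNormalSchwartz]
    rfl
  rw [← coe_stdNormalSchwartz]
  have hz₁ (ψ : 𝓢(ℝ, ℝ)) (z₁ z₂ : ℝ) (hz : z₂ ≠ 0) :=
    (hF.hasDerivAt_affineIntegral_add_mul ψ (inv_ne_zero hz) β₀ β₁ z₁).deriv
  have hz₂ (z₁ z₂ : ℝ) (hz : z₂ ≠ 0) :=
    (hF.hasDerivAt_affineIntegral_inv φ hz (β₀ + β₁ * z₁)).deriv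
  refine ⟨?_, fun z₁ z₂ hz => ?_, fun z₁ z₂ hz => ?_, fun z₁ z₂ hz => ?_⟩
  · have hinv : ContDiffOn ℝ ∞ (fun p : ℝ × ℝ => p.2⁻¹) {p | p.2 ≠ 0} :=
      contDiff_snd.contDiffOn.inv fun _ hp => hp
    exact (hF.contDiffOn_affineIntegral φ).comp (hinv.prodMk (by fun_prop)) fun _ => inv_ne_zero
  · rw [hz₁ φ z₁ z₂ hz, affineIntegral_inv_add]
    rfl
  · rw [hz₂ z₁ z₂ hz, affineIntegral_inv_add]
    rfl
  · rw [funext fun s => hz₁ φ s z₂ hz, deriv_fun_const_smul_field, hz₁ _ z₁ z₂ hz, hz₂ z₁ z₂ hz,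
      hF.affineIntegral_deriv_deriv_stdNormalSchwartz (inv_ne_zero hz)]
    simp only [smul_eq_mul]
    field_simp
    ring

/-- the key differential identity from the proof of Proposition 2.
With `η̃(z₁,z₂) = ∫ F(t) φ(t/z₂ − β₀ − β₁ z₁) dt`, `η̃` is smooth away from
`z₂ = 0`, its partial derivatives are given by differentiation under the integral
sign, and it satisfies the stated second-order partial differential equation. -/
theorem eta_pde
    (F : ℝ → ℝ) (hFm : Measurable F) (hFb : ∃ C : ℝ, ∀ t, |F t| ≤ C)
    (β₀ β₁ : ℝ) (η : ℝ → ℝ → ℝ)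
    (hη : ∀ z₁ z₂ : ℝ, η z₁ z₂ = ∫ t : ℝ, F t * stdNormalPDF (t / z₂ - β₀ - β₁ * z₁)) :
    ContDiffOn ℝ (⊤ : ℕ∞) (fun p : ℝ × ℝ => η p.1 p.2) {p : ℝ × ℝ | p.2 ≠ 0} ∧
    (∀ z₁ z₂ : ℝ, z₂ ≠ 0 →
      deriv (fun s => η s z₂) z₁ =
        -β₁ * ∫ t : ℝ, F t * deriv stdNormalPDF (t / z₂ - β₀ - β₁ * z₁)) ∧
    (∀ z₁ z₂ : ℝ, z₂ ≠ 0 →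
      deriv (fun s => η z₁ s) z₂ =
        -(z₂ ^ 2)⁻¹ * ∫ t : ℝ, F t * t * deriv stdNormalPDF (t / z₂ - β₀ - β₁ * z₁)) ∧
    (∀ z₁ z₂ : ℝ, z₂ ≠ 0 →
      deriv (deriv (fun s => η s z₂)) z₁ =
        -β₁ ^ 2 * η z₁ z₂ - β₁ * (β₀ + β₁ * z₁) * deriv (fun s => η s z₂) z₁
          + β₁ ^ 2 * z₂ * deriv (fun s => η z₁ s) z₂) := by
  obtain ⟨C, hC⟩ := hFb
  exact eta_pde_general (isTempered_of_bounded hFm.aestronglyMeasurable (.of_forall hC)) β₀ β₁ η hη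
end
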